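/- Let ν ≥ 0, let G ∈ ℝ^{r₁×(r₃·r₂)} with ‖G‖_F ≤ ν, let B, B̃ ∈ ℝ^{m×r₂} and C, C̃ ∈ ℝ^{p×r₃} all have orthonormal columns, and let x ∈ ℝ^{p·m} (indexed by Fin p × Fin m). Then ‖G (C̃ ⊗ B̃)ᵀ x xᵀ (C̃ ⊗ B̃) − G (C ⊗ B)ᵀ x xᵀ (C ⊗ B)‖_F ≤ 2 ν ‖x‖₂² (‖B̃ − B‖_F + ‖C̃ − C‖_F). -/

import Mathlib

open Matrix
open scoped Kronecker

/-- The Euclidean (ℓ²) norm of a real vector. -/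
noncomputable def euclNorm {n : Type*} [Fintype n] (v : n → ℝ) : ℝ :=
  Real.sqrt (∑ i, (v i) ^ 2)

/-- The Frobenius norm of a real matrix. -/
noncomputable def frobNorm {m n : Type*} [Fintype m] [Fintype n] (A : Matrix m n ℝ) : ℝ :=
  Real.sqrt (∑ i, ∑ j, (A i j) ^ 2)

/-!
For `K = C ⊗ₖ B` and `u = Kᵀ x`, the matrix `G Kᵀ x xᵀ K` is the rank-one matrix `(G u) uᵀ`.
Its variation with `u` telescopes as `(G (v - u)) vᵀ + (G u) (v - u)ᵀ`, and `v - u = (Kt - K)ᵀ x` is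
controlled by the spectral norm of `Kt - K = Ct ⊗ₖ (Bt - B) + (Ct - C) ⊗ₖ B`. The spectral norm
is submultiplicative for Kronecker products, is at most `1` on matrices with orthonormal columns,
and is at most the Frobenius norm.
-/

open scoped Matrix.Norms.L2Operator

section

variable {k l m n p q : Type*} [Fintype k] [Fintype l] [Fintype m] [Fintype n] [Fintype p]
  [Fintype q]

lemma euclNorm_eq_norm_toLp (v : n → ℝ) : euclNorm v = ‖WithLp.toLp 2 v‖ := by
  simp only [euclNorm, EuclideanSpace.norm_eq, Real.norm_eq_abs, sq_abs]

lemma euclNorm_nonneg (v : n → ℝ) : 0 ≤ euclNorm v :=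
  Real.sqrt_nonneg _

lemma euclNorm_add_le (v w : n → ℝ) : euclNorm (v + w) ≤ euclNorm v + euclNorm w := by
  simp only [euclNorm_eq_norm_toLp, WithLp.toLp_add]
  exact norm_add_le _ _

lemma euclNorm_vec (A : Matrix m n ℝ) : euclNorm A.vec = frobNorm A := by
  simp only [euclNorm, frobNorm, Fintype.sum_prod_type, vec]
  rw [Finset.sum_comm]

lemma frobNorm_nonneg (A : Matrix m n ℝ) : 0 ≤ frobNorm A :=
  Real.sqrt_nonneg _

lemma frobNorm_add_le (A B : Matrix m n ℝ) : frobNorm (A + B) ≤ frobNorm A + frobNorm B := by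
  simp only [← euclNorm_vec, vec_add]
  exact euclNorm_add_le _ _

lemma frobNorm_transpose (A : Matrix m n ℝ) : frobNorm Aᵀ = frobNorm A := by
  simp only [frobNorm, transpose_apply]
  rw [Finset.sum_comm]

lemma frobNorm_sq_eq_sum_euclNorm_col_sq (A : Matrix m n ℝ) :
    frobNorm A ^ 2 = ∑ j, euclNorm (A.col j) ^ 2 := by
  have sum_sq_nonneg (j : n) : 0 ≤ ∑ i, A i j ^ 2 := by positivity
  simp only [frobNorm, euclNorm, col_apply, Real.sq_sqrt (sum_sq_nonneg _)]
  rw [Real.sq_sqrt (by positivity), Finset.sum_comm]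

lemma frobNorm_vecMulVec (v : m → ℝ) (w : n → ℝ) :
    frobNorm (vecMulVec v w) = euclNorm v * euclNorm w := by
  rw [frobNorm, euclNorm, euclNorm, ← Real.sqrt_mul (by positivity), Finset.sum_mul_sum]
  simp only [vecMulVec_apply, mul_pow]

lemma euclNorm_mulVec_le_frobNorm_mul (A : Matrix m n ℝ) (v : n → ℝ) :
    euclNorm (A *ᵥ v) ≤ frobNorm A * euclNorm v := by
  rw [euclNorm, frobNorm, euclNorm, ← Real.sqrt_mul (by positivity), Finset.sum_mul]
  gcongr with i
  exact Finset.sum_mul_sq_le_sq_mul_sq _ _ _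

lemma euclNorm_mulVec_le [DecidableEq n] (A : Matrix m n ℝ) (v : n → ℝ) :
    euclNorm (A *ᵥ v) ≤ ‖A‖ * euclNorm v := by
  rw [euclNorm_eq_norm_toLp, euclNorm_eq_norm_toLp]
  exact l2_opNorm_mulVec A (WithLp.toLp 2 v)

lemma l2_opNorm_le_of_forall_euclNorm_mulVec_le [DecidableEq n] {A : Matrix m n ℝ} {c : ℝ}
    (hc : 0 ≤ c) (h : ∀ v, euclNorm (A *ᵥ v) ≤ c * euclNorm v) : ‖A‖ ≤ c := by
  rw [l2_opNorm_def]
  refine ContinuousLinearMap.opNorm_le_bound _ hc fun v => ?_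
  have mulVec_le := h v.ofLp
  rwa [euclNorm_eq_norm_toLp, euclNorm_eq_norm_toLp] at mulVec_le

lemma l2_opNorm_le_frobNorm [DecidableEq n] (A : Matrix m n ℝ) : ‖A‖ ≤ frobNorm A :=
  l2_opNorm_le_of_forall_euclNorm_mulVec_le (frobNorm_nonneg A) (euclNorm_mulVec_le_frobNorm_mul A)

lemma l2_opNorm_transpose [DecidableEq m] [DecidableEq n] (A : Matrix m n ℝ) : ‖Aᵀ‖ = ‖A‖ := by
  rw [← conjTranspose_eq_transpose_of_trivial, l2_opNorm_conjTranspose]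

lemma l2_opNorm_le_one_of_transpose_mul_self_eq_one [DecidableEq n] {A : Matrix m n ℝ}
    (hA : Aᵀ * A = 1) : ‖A‖ ≤ 1 := by
  have norm_one_le : ‖(1 : Matrix n n ℝ)‖ ≤ 1 :=
    l2_opNorm_le_of_forall_euclNorm_mulVec_le zero_le_one fun v => by rw [one_mulVec, one_mul]
  have norm_mul_self : ‖A‖ * ‖A‖ = ‖(1 : Matrix n n ℝ)‖ := by
    rw [← l2_opNorm_conjTranspose_mul_self, conjTranspose_eq_transpose_of_trivial, hA]
  exact le_of_abs_le (abs_le_one_iff_mul_self_le_one.mpr (norm_mul_self.trans_le norm_one_le))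

lemma euclNorm_transpose_mulVec_le [DecidableEq n] (A : Matrix m n ℝ) (v : m → ℝ) :
    euclNorm (Aᵀ *ᵥ v) ≤ ‖A‖ * euclNorm v := by
  classical
  simpa only [l2_opNorm_transpose] using euclNorm_mulVec_le Aᵀ v

lemma frobNorm_mul_le_l2_opNorm_mul [DecidableEq m] (A : Matrix l m ℝ) (X : Matrix m n ℝ) :
    frobNorm (A * X) ≤ ‖A‖ * frobNorm X := by
  refine le_of_sq_le_sq ?_ (mul_nonneg (norm_nonneg A) (frobNorm_nonneg X))
  rw [mul_pow, frobNorm_sq_eq_sum_euclNorm_col_sq, frobNorm_sq_eq_sum_euclNorm_col_sq,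
    Finset.mul_sum]
  gcongr with j
  rw [← mul_pow]
  have := euclNorm_nonneg ((A * X).col j)
  gcongr
  exact euclNorm_mulVec_le A (X.col j)

lemma l2_opNorm_kronecker_le [DecidableEq n] [DecidableEq q] (A : Matrix m n ℝ)
    (B : Matrix p q ℝ) : ‖A ⊗ₖ B‖ ≤ ‖A‖ * ‖B‖ := by
  refine l2_opNorm_le_of_forall_euclNorm_mulVec_le (by positivity) fun v => ?_
  obtain ⟨X, rfl⟩ := vec_bijective.surjective v
  rw [kronecker_mulVec_vec, euclNorm_vec, euclNorm_vec]
  calc frobNorm (B * X * Aᵀ)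
      = frobNorm (A * (B * X)ᵀ) := by
        rw [← frobNorm_transpose, transpose_mul, transpose_transpose]
    _ ≤ ‖A‖ * frobNorm (B * X) := by
        grw [frobNorm_mul_le_l2_opNorm_mul, frobNorm_transpose]
    _ ≤ ‖A‖ * ‖B‖ * frobNorm X := by
        grw [frobNorm_mul_le_l2_opNorm_mul, mul_assoc]

lemma l2_opNorm_kronecker_sub_kronecker_le [DecidableEq n] [DecidableEq q]
    (A A' : Matrix m n ℝ) (B B' : Matrix p q ℝ) :
    ‖A' ⊗ₖ B' - A ⊗ₖ B‖ ≤ ‖A'‖ * ‖B' - B‖ + ‖A' - A‖ * ‖B‖ := by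
  have telescope : A' ⊗ₖ B' - A ⊗ₖ B = A' ⊗ₖ (B' - B) + (A' - A) ⊗ₖ B := by
    ext ⟨i, i'⟩ ⟨j, j'⟩
    simp only [Matrix.sub_apply, Matrix.add_apply, kronecker_apply]
    ring
  grw [telescope, norm_add_le, l2_opNorm_kronecker_le, l2_opNorm_kronecker_le]

lemma mul_transpose_mul_vecMulVec_mul {r : Type*} (G : Matrix r k ℝ) (K : Matrix n k ℝ)
    (x : n → ℝ) :
    G * Kᵀ * vecMulVec x x * K = vecMulVec (G *ᵥ (Kᵀ *ᵥ x)) (Kᵀ *ᵥ x) := by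
  rw [mul_vecMulVec, vecMulVec_mul, mulVec_mulVec, mulVec_transpose]

lemma frobNorm_vecMulVec_mulVec_self_sub_le [DecidableEq n] (G : Matrix m n ℝ) (u v : n → ℝ) :
    frobNorm (vecMulVec (G *ᵥ v) v - vecMulVec (G *ᵥ u) u)
      ≤ ‖G‖ * (euclNorm v + euclNorm u) * euclNorm (v - u) := by
  have telescope : vecMulVec (G *ᵥ v) v - vecMulVec (G *ᵥ u) u
      = vecMulVec (G *ᵥ (v - u)) v + vecMulVec (G *ᵥ u) (v - u) := by
    rw [mulVec_sub, sub_vecMulVec, vecMulVec_sub, sub_add_sub_cancel]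
  have := euclNorm_nonneg v
  have := euclNorm_nonneg (v - u)
  calc frobNorm (vecMulVec (G *ᵥ v) v - vecMulVec (G *ᵥ u) u)
      ≤ euclNorm (G *ᵥ (v - u)) * euclNorm v + euclNorm (G *ᵥ u) * euclNorm (v - u) := by
        grw [telescope, frobNorm_add_le, frobNorm_vecMulVec, frobNorm_vecMulVec]
    _ ≤ ‖G‖ * euclNorm (v - u) * euclNorm v + ‖G‖ * euclNorm u * euclNorm (v - u) := by
        grw [euclNorm_mulVec_le, euclNorm_mulVec_le]
    _ = ‖G‖ * (euclNorm v + euclNorm u) * euclNorm (v - u) := by ring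

lemma frobNorm_quadratic_form_sub_le [DecidableEq k] (G : Matrix l k ℝ) (K L : Matrix n k ℝ)
    (x : n → ℝ) :
    frobNorm (G * Lᵀ * vecMulVec x x * L - G * Kᵀ * vecMulVec x x * K)
      ≤ ‖G‖ * euclNorm x ^ 2 * ((‖L‖ + ‖K‖) * ‖L - K‖) := by
  have := euclNorm_nonneg x
  have := euclNorm_nonneg ((L - K)ᵀ *ᵥ x)
  rw [mul_transpose_mul_vecMulVec_mul, mul_transpose_mul_vecMulVec_mul]
  calc frobNorm (vecMulVec (G *ᵥ (Lᵀ *ᵥ x)) (Lᵀ *ᵥ x) - vecMulVec (G *ᵥ (Kᵀ *ᵥ x)) (Kᵀ *ᵥ x))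
      ≤ ‖G‖ * (euclNorm (Lᵀ *ᵥ x) + euclNorm (Kᵀ *ᵥ x)) * euclNorm ((L - K)ᵀ *ᵥ x) := by
        rw [transpose_sub, sub_mulVec]
        exact frobNorm_vecMulVec_mulVec_self_sub_le _ _ _
    _ ≤ ‖G‖ * (‖L‖ * euclNorm x + ‖K‖ * euclNorm x) * (‖L - K‖ * euclNorm x) := by
        gcongr <;> exact euclNorm_transpose_mulVec_le _ _
    _ = ‖G‖ * euclNorm x ^ 2 * ((‖L‖ + ‖K‖) * ‖L - K‖) := by ring

theorem quadratic_form_kronecker_perturbation_general [DecidableEq n] [DecidableEq q]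
    (G : Matrix l (n × q) ℝ) {B Bt : Matrix p q ℝ} {C Ct : Matrix m n ℝ}
    (hB : ‖B‖ ≤ 1) (hBt : ‖Bt‖ ≤ 1) (hC : ‖C‖ ≤ 1) (hCt : ‖Ct‖ ≤ 1) (x : m × p → ℝ) :
    frobNorm (G * (Ct ⊗ₖ Bt)ᵀ * vecMulVec x x * (Ct ⊗ₖ Bt)
              - G * (C ⊗ₖ B)ᵀ * vecMulVec x x * (C ⊗ₖ B))
      ≤ 2 * ‖G‖ * euclNorm x ^ 2 * (‖Bt - B‖ + ‖Ct - C‖) := by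
  have norm_K_le : ‖C ⊗ₖ B‖ ≤ 1 :=
    (l2_opNorm_kronecker_le C B).trans (mul_le_one₀ hC (norm_nonneg B) hB)
  have norm_Kt_le : ‖Ct ⊗ₖ Bt‖ ≤ 1 :=
    (l2_opNorm_kronecker_le Ct Bt).trans (mul_le_one₀ hCt (norm_nonneg Bt) hBt)
  have norm_sub_le : ‖Ct ⊗ₖ Bt - C ⊗ₖ B‖ ≤ ‖Bt - B‖ + ‖Ct - C‖ := by
    grw [l2_opNorm_kronecker_sub_kronecker_le, hCt, hB, one_mul, mul_one]
  calc _ ≤ ‖G‖ * euclNorm x ^ 2 * ((‖Ct ⊗ₖ Bt‖ + ‖C ⊗ₖ B‖) * ‖Ct ⊗ₖ Bt - C ⊗ₖ B‖) :=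
        frobNorm_quadratic_form_sub_le G (C ⊗ₖ B) (Ct ⊗ₖ Bt) x
    _ ≤ ‖G‖ * euclNorm x ^ 2 * ((1 + 1) * (‖Bt - B‖ + ‖Ct - C‖)) := by gcongr
    _ = 2 * ‖G‖ * euclNorm x ^ 2 * (‖Bt - B‖ + ‖Ct - C‖) := by ring

end

/-- Quadratic-form perturbation bound in the Kronecker factors: if `‖G‖_F ≤ ν` and
`B, B̃, C, C̃` have orthonormal columns, then
`‖G (C̃ ⊗ B̃)ᵀ x xᵀ (C̃ ⊗ B̃) − G (C ⊗ B)ᵀ x xᵀ (C ⊗ B)‖_F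
  ≤ 2 ν ‖x‖₂² (‖B̃ − B‖_F + ‖C̃ − C‖_F)`. -/
theorem quadratic_form_kronecker_perturbation
    (m p r₁ r₂ r₃ : ℕ) (ν : ℝ) (hν : 0 ≤ ν)
    (G : Matrix (Fin r₁) (Fin r₃ × Fin r₂) ℝ) (hG : frobNorm G ≤ ν)
    (B Bt : Matrix (Fin m) (Fin r₂) ℝ)
    (C Ct : Matrix (Fin p) (Fin r₃) ℝ)
    (hB : Bᵀ * B = 1) (hBt : Btᵀ * Bt = 1)
    (hC : Cᵀ * C = 1) (hCt : Ctᵀ * Ct = 1)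
    (x : Fin p × Fin m → ℝ) :
    frobNorm (G * (Ct ⊗ₖ Bt)ᵀ * Matrix.vecMulVec x x * (Ct ⊗ₖ Bt)
              - G * (C ⊗ₖ B)ᵀ * Matrix.vecMulVec x x * (C ⊗ₖ B))
      ≤ 2 * ν * euclNorm x ^ 2 * (frobNorm (Bt - B) + frobNorm (Ct - C)) := by
  grw [quadratic_form_kronecker_perturbation_general G
    (l2_opNorm_le_one_of_transpose_mul_self_eq_one hB)
    (l2_opNorm_le_one_of_transpose_mul_self_eq_one hBt)
    (l2_opNorm_le_one_of_transpose_mul_self_eq_one hC)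
    (l2_opNorm_le_one_of_transpose_mul_self_eq_one hCt) x,
    l2_opNorm_le_frobNorm G, hG, l2_opNorm_le_frobNorm, l2_opNorm_le_frobNorm]
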